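/- Let m be a squarefree positive integer with gcd(m, 30) = 1, and let f : (Z/mZ)* → [0,1] be a function with ∑_{x ∈ (Z/mZ)*} f(x) > (5/8)·φ(m). Then for every x ∈ Z/mZ there exist units a, b, c ∈ (Z/mZ)* with x = a + b + c such that f(a)f(b) + f(b)f(c) + f(c)f(a) > (5/8)(f(a) + f(b) + f(c)). -/

import Mathlib

lemma box_bound {X Y Z u v w : ℝ} (hX : -(23/11) ≤ X) (hY : -(23/11) ≤ Y) (hZ : -(23/11) ≤ Z)
    (hXu : X ≤ u) (hYv : Y ≤ v) (hZw : Z ≤ w) :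
    X*Y+Y*Z+Z*X ≤ u*v+v*w+w*u ∨ X*Y+Y*Z+Z*X ≤ 33 := by
  have key : ∀ X Y Z : ℝ, -(23/11) ≤ X → -(23/11) ≤ Y → -(23/11) ≤ Z → Y + Z < 0 →
      X*Y+Y*Z+Z*X ≤ 33 := by
    intro X Y Z hX hY hZ h
    have h1 : 0 ≤ (X + 23/11) * (-(Y+Z)) := mul_nonneg (by linarith) (by linarith)
    have h2 : (23/11 - Y) * (23/11 - Z) ≤ (46/11) * (46/11) :=
      mul_le_mul (by linarith) (by linarith) (by linarith) (by norm_num)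
    nlinarith
  by_cases h1 : Y + Z < 0
  · right; exact key X Y Z hX hY hZ h1
  by_cases h2 : Z + X < 0
  · right; have := key Y Z X hY hZ hX h2; linarith
  by_cases h3 : X + Y < 0
  · right; have := key Z X Y hZ hX hY h3; linarith
  left
  have e1 : 0 ≤ (u - X) * (Y + Z) := mul_nonneg (by linarith) (by linarith)
  have e2 : 0 ≤ (v - Y) * (u + Z) := mul_nonneg (by linarith) (by linarith)
  have e3 : 0 ≤ (w - Z) * (u + v) := mul_nonneg (by linarith) (by linarith)
  nlinarith

lemma pair_pos {u v w : ℝ} (hv : -(23/11) ≤ v) (hw : -(23/11) ≤ w) (hu : -(23/11) ≤ u)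
    (h : 33 < u*v+v*w+w*u) : 0 < v + w := by
  by_contra h0
  have h1 : 0 ≤ (u + 23/11) * (-(v+w)) := mul_nonneg (by linarith) (by linarith)
  have h2 : (23/11 - v) * (23/11 - w) ≤ (46/11) * (46/11) :=
    mul_le_mul (by linarith) (by linarith) (by linarith) (by norm_num)
  nlinarith

lemma core_ineq {x y z u v w : ℝ} (hu : -(23/11) ≤ u) (hv : -(23/11) ≤ v) (hw : -(23/11) ≤ w)
    (hux : u ≤ x) (hvy : v ≤ y) (hwz : w ≤ z)
    (h1 : x*v+v*w+w*x ≤ 75) (h2 : u*y+y*w+w*u ≤ 75) (h3 : u*v+v*z+z*u ≤ 75)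
    (hP : 67/2 < u*v+v*w+w*u) :
    x*y+y*z+z*x + 7 * (u*v+v*w+w*u) ≤ 600 := by
  have ha : 0 < v + w := pair_pos hv hw hu (by linarith)
  have hb : 0 < w + u := pair_pos hw hu hv (by linarith)
  have hc : 0 < u + v := pair_pos hu hv hw (by linarith)
  obtain ⟨a, ea⟩ : ∃ a, a = v + w := ⟨_, rfl⟩
  obtain ⟨b, eb⟩ : ∃ b, b = w + u := ⟨_, rfl⟩
  obtain ⟨c, ec⟩ : ∃ c, c = u + v := ⟨_, rfl⟩
  obtain ⟨d, ed⟩ : ∃ d, d = x - u := ⟨_, rfl⟩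
  obtain ⟨e, ee⟩ : ∃ e, e = y - v := ⟨_, rfl⟩
  obtain ⟨f, ef⟩ : ∃ f, f = z - w := ⟨_, rfl⟩
  obtain ⟨s, es⟩ : ∃ s, s = 75 - (u*v+v*w+w*u) := ⟨_, rfl⟩
  rw [← ea] at ha; rw [← eb] at hb; rw [← ec] at hc
  have hd : 0 ≤ d := by linarith
  have he : 0 ≤ e := by linarith
  have hf : 0 ≤ f := by linarith
  have k1 : d * a ≤ s := by subst_vars; linarith
  have k2 : e * b ≤ s := by subst_vars; linarith
  have k3 : f * c ≤ s := by subst_vars; linarith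
  have hs : 0 ≤ s := le_trans (by positivity) k1
  -- main cubic inequality
  have hm : s * (a + b + c) ≤ 5 * (a * b * c) := by
    have hsig : 0 < u + v + w := by linarith
    have huvw : 9 * (u * v * w) ≤ (u+v+w) * (u*v+v*w+w*u) := by
      have hpos : 0 < (u+v+w) * (u*v+v*w+w*u) := mul_pos hsig (by linarith)
      by_cases hu0 : 0 ≤ u
      · by_cases hv0 : 0 ≤ v
        · by_cases hw0 : 0 ≤ w
          · nlinarith [mul_nonneg hu0 (sq_nonneg (v-w)), mul_nonneg hv0 (sq_nonneg (u-w)),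
              mul_nonneg hw0 (sq_nonneg (u-v))]
          · have : u * v * w ≤ 0 := mul_nonpos_of_nonneg_of_nonpos (by positivity) (by linarith)
            linarith
        · have : (u * w) * v ≤ 0 :=
            mul_nonpos_of_nonneg_of_nonpos (mul_nonneg hu0 (by linarith)) (by linarith)
          nlinarith
      · have : (v * w) * u ≤ 0 :=
          mul_nonpos_of_nonneg_of_nonpos (mul_nonneg (by linarith) (by linarith)) (by linarith)
        nlinarith
    have hq : 0 ≤ (u+v+w) * ((u*v+v*w+w*u) - 67/2) := mul_nonneg hsig.le (by linarith)
    subst_vars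
    nlinarith
  have hde : d * e * (a * b * c) ≤ s * s * c := by
    have := mul_le_mul_of_nonneg_right (mul_le_mul k1 k2 (by positivity) hs) hc.le
    linarith
  have hef : e * f * (a * b * c) ≤ s * s * a := by
    have := mul_le_mul_of_nonneg_right (mul_le_mul k2 k3 (by positivity) hs) ha.le
    linarith
  have hfd : f * d * (a * b * c) ≤ s * s * b := by
    have := mul_le_mul_of_nonneg_right (mul_le_mul k3 k1 (by positivity) hs) hb.le
    linarith
  have habc : 0 < a * b * c := by positivity
  have hfin : d*e+e*f+f*d ≤ 5 * s := by
    have h5 := mul_le_mul_of_nonneg_left hm hs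
    refine le_of_mul_le_mul_right (?_ : _ * (a*b*c) ≤ _ * (a*b*c)) habc
    linarith
  have : x*y+y*z+z*x = (u*v+v*w+w*u) + d*a + e*b+f*c + (d*e+e*f+f*d) := by
    subst_vars; ring
  linarith

/-- The real inequality for sequences. -/
lemma seq_ineq (m n : ℕ) (hm : 3 ≤ m) (hn : n = 2 * m) [NeZero n] (X Y Z : ℕ → ℝ)
    (hX : ∀ i j, i ≤ j → j < n → X j ≤ X i)
    (hY : ∀ i j, i ≤ j → j < n → Y j ≤ Y i)
    (hZ : ∀ i j, i ≤ j → j < n → Z j ≤ Z i)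
    (lX : ∀ i < n, -(23/11) ≤ X i) (lY : ∀ i < n, -(23/11) ≤ Y i) (lZ : ∀ i < n, -(23/11) ≤ Z i)
    (uX : X 0 ≤ 11) (uY : Y 0 ≤ 11) (uZ : Z 0 ≤ 11)
    (H : ∀ i j k, i < n → j < n → k < n → n ≤ i + j + k →
      X i * Y j + Y j * Z k + Z k * X i ≤ 75) :
    (∑ i : ZMod n, X i.val) * (∑ i : ZMod n, Y i.val) +
      (∑ i : ZMod n, Y i.val) * (∑ i : ZMod n, Z i.val) +
      (∑ i : ZMod n, Z i.val) * (∑ i : ZMod n, X i.val) ≤ 75 * (n:ℝ)^2 := by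
  classical
  let T : ZMod n × ZMod n → ℝ := fun p =>
    X p.1.val * Y p.2.val + Y p.2.val * Z (-p.1-p.2).val + Z (-p.1-p.2).val * X p.1.val
  have hsum : ∑ p, T p = (∑ i : ZMod n, X i.val) * (∑ i : ZMod n, Y i.val) +
      (∑ i : ZMod n, Y i.val) * (∑ i : ZMod n, Z i.val) +
      (∑ i : ZMod n, Z i.val) * (∑ i : ZMod n, X i.val) := by
    simp only [T, Finset.sum_add_distrib]
    congr 1
    · congr 1
      · rw [Fintype.sum_prod_type, Finset.sum_mul_sum]
      · rw [Fintype.sum_prod_type_right, Finset.sum_mul]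
        refine Finset.sum_congr rfl fun j _ => ?_
        dsimp only
        rw [← Finset.mul_sum]
        congr 1
        have := Equiv.sum_comp ((Equiv.neg (ZMod n)).trans (Equiv.subRight j)) (fun k => Z k.val)
        simpa using this
    · rw [Fintype.sum_prod_type, mul_comm, Finset.sum_mul]
      refine Finset.sum_congr rfl fun i _ => ?_
      dsimp only
      rw [← Finset.sum_mul, mul_comm]
      congr 1
      have := Equiv.sum_comp (Equiv.subLeft (-i)) (fun k => Z k.val)
      simpa using this
  have hcell : ∀ p : ZMod n × ZMod n, p ≠ (0,0) → T p ≤ 75 := by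
    rintro ⟨i, j⟩ hp
    refine H _ _ _ (ZMod.val_lt _) (ZMod.val_lt _) (ZMod.val_lt _) ?_
    have h0 : ((i.val + j.val + (-i-j).val : ℕ) : ZMod n) = 0 := by
      push_cast; simp only [ZMod.natCast_zmod_val]; ring
    rw [ZMod.natCast_eq_zero_iff] at h0
    refine Nat.le_of_dvd ?_ h0
    dsimp only
    by_contra hc
    have h1 : i.val = 0 := by omega
    have h2 : j.val = 0 := by omega
    rw [ZMod.val_eq_zero] at h1 h2
    exact hp (by rw [h1, h2])
  have hval : ∀ a b c : ℕ, a < n → b < n → c < n → a + b + c = 2 * n →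
      T ((a : ZMod n), (b : ZMod n)) = X a * Y b + Y b * Z c + Z c * X a := by
    intro a b c ha hb hc habc
    have h0 : (-(a : ZMod n) - (b : ZMod n)) = (c : ZMod n) := by
      have : ((a + b + c : ℕ) : ZMod n) = 0 := by
        rw [habc]; simp
      push_cast at this
      linear_combination -this
    simp only [T, h0, ZMod.val_natCast_of_lt ha, ZMod.val_natCast_of_lt hb,
      ZMod.val_natCast_of_lt hc]
  let ι : ℕ × ℕ → ZMod n × ZMod n := fun p => ((p.1 : ZMod n), (p.2 : ZMod n))
  let S0 : Finset (ℕ × ℕ) :=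
    {(0,0), (m,m+1), (m,n-1), (m+1,m), (m+1,n-1), (n-1,m), (n-1,m+1), (m+1,m+1)}
  have hlt : ∀ p ∈ S0, p.1 < n ∧ p.2 < n := by
    intro p hp
    simp only [S0, Finset.mem_insert, Finset.mem_singleton] at hp
    rcases hp with rfl|rfl|rfl|rfl|rfl|rfl|rfl|rfl <;> constructor <;> dsimp only <;> omega
  have hinj : Set.InjOn ι (S0 : Set (ℕ × ℕ)) := by
    rintro ⟨a, b⟩ hp ⟨c, d⟩ hq h
    have h1 := hlt _ hp
    have h2 := hlt _ hq
    simp only [ι, Prod.mk.injEq] at h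
    have e1 := congrArg ZMod.val h.1
    have e2 := congrArg ZMod.val h.2
    rw [ZMod.val_natCast_of_lt h1.1, ZMod.val_natCast_of_lt h2.1] at e1
    rw [ZMod.val_natCast_of_lt h1.2, ZMod.val_natCast_of_lt h2.2] at e2
    exact Prod.ext e1 e2
  have hsplit : ∑ p ∈ S0, (75 - T (ι p)) ≤ ∑ p, (75 - T p) := by
    rw [← Finset.sum_image (f := fun p => 75 - T p) hinj]
    refine Finset.sum_le_sum_of_subset_of_nonneg (Finset.subset_univ _) ?_
    intro p _ hp
    have : p ≠ (0,0) := by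
      rintro rfl
      apply hp
      rw [Finset.mem_image]
      exact ⟨(0,0), by simp [S0], by simp [ι]⟩
    linarith [hcell p this]
  have hall : ∑ p, (75 - T p) = 75 * (n:ℝ)^2 - ∑ p, T p := by
    rw [Finset.sum_sub_distrib]
    simp [ZMod.card]; ring
  rw [← hsum]
  suffices hS : 0 ≤ ∑ p ∈ S0, (75 - T (ι p)) by linarith
  have hexp : ∑ p ∈ S0, (75 - T (ι p)) = (75 - T (ι (0,0))) + ((75 - T (ι (m,m+1))) +
      ((75 - T (ι (m,n-1))) + ((75 - T (ι (m+1,m))) + ((75 - T (ι (m+1,n-1))) +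
      ((75 - T (ι (n-1,m))) + ((75 - T (ι (n-1,m+1))) + (75 - T (ι (m+1,m+1))))))))) := by
    simp only [S0]
    rw [Finset.sum_insert, Finset.sum_insert, Finset.sum_insert, Finset.sum_insert,
      Finset.sum_insert, Finset.sum_insert, Finset.sum_insert, Finset.sum_singleton]
    all_goals
      simp only [Finset.mem_insert, Finset.mem_singleton, Prod.mk.injEq]
      omega
  have h0 : T (ι (0,0)) = X 0 * Y 0 + Y 0 * Z 0 + Z 0 * X 0 := by simp [T, ι]
  have lX0 := lX 0 (by omega)
  have lY0 := lY 0 (by omega)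
  have lZ0 := lZ 0 (by omega)
  have lXm := lX m (by omega)
  have lYm := lY m (by omega)
  have lZm := lZ m (by omega)
  have hbig : X 0 * Y 0 + Y 0 * Z 0 + Z 0 * X 0 ≤ 363 := by
    rcases box_bound lX0 lY0 lZ0 uX uY uZ with h | h <;> linarith
  have c1 := H 0 m m (by omega) (by omega) (by omega) (by omega)
  have c2 := H m 0 m (by omega) (by omega) (by omega) (by omega)
  have c3 := H m m 0 (by omega) (by omega) (by omega) (by omega)
  obtain ⟨M, hM1, hM2, hM3⟩ : ∃ M : ℝ, X m * Y m + Y m * Z m + Z m * X m ≤ M ∧ 33 ≤ M ∧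
      X 0 * Y 0 + Y 0 * Z 0 + Z 0 * X 0 + 7 * M ≤ 600 := by
    by_cases hP : 67/2 < X m * Y m + Y m * Z m + Z m * X m
    · refine ⟨_, le_rfl, by linarith, ?_⟩
      exact core_ineq lXm lYm lZm (hX 0 m (by omega) (by omega)) (hY 0 m (by omega) (by omega))
        (hZ 0 m (by omega) (by omega)) c1 c2 c3 hP
    · exact ⟨67/2, by linarith, by norm_num, by linarith⟩
  have hb : ∀ a b c : ℕ, a < n → b < n → c < n → m ≤ a → m ≤ b → m ≤ c → a + b + c = 2 * n →
      T (ι (a,b)) ≤ M := by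
    intro a b c ha hb hc ha' hb' hc' h
    have := hval a b c ha hb hc h
    simp only [ι]
    rw [this]
    rcases box_bound (lX a ha) (lY b hb) (lZ c hc) (hX m a ha' ha) (hY m b hb' hb)
      (hZ m c hc' hc) with h | h <;> linarith
  have t1 := hb m (m+1) (n-1) (by omega) (by omega) (by omega) (by omega) (by omega) (by omega) (by omega)
  have t2 := hb m (n-1) (m+1) (by omega) (by omega) (by omega) (by omega) (by omega) (by omega) (by omega)
  have t3 := hb (m+1) m (n-1) (by omega) (by omega) (by omega) (by omega) (by omega) (by omega) (by omega)
  have t4 := hb (m+1) (n-1) m (by omega) (by omega) (by omega) (by omega) (by omega) (by omega) (by omega)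
  have t5 := hb (n-1) m (m+1) (by omega) (by omega) (by omega) (by omega) (by omega) (by omega) (by omega)
  have t6 := hb (n-1) (m+1) m (by omega) (by omega) (by omega) (by omega) (by omega) (by omega) (by omega)
  have t7 := hb (m+1) (m+1) (n-2) (by omega) (by omega) (by omega) (by omega) (by omega) (by omega) (by omega)
  rw [hexp, h0]
  linarith

lemma exists_sorted {U : Type*} [Fintype U] (n : ℕ) [NeZero n] (hc : Fintype.card U = n)
    (F : U → ℝ) : ∃ (X : ℕ → ℝ) (e : Fin n ≃ U), (∀ i : Fin n, X i = F (e i)) ∧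
      (∀ i j, i ≤ j → j < n → X j ≤ X i) ∧ ∑ i : ZMod n, X i.val = ∑ u, F u := by
  classical
  let e0 : U ≃ Fin n := Fintype.equivFinOfCardEq hc
  let e : Fin n ≃ U := (Tuple.sort (fun i => -F (e0.symm i))).trans e0.symm
  have hmono := Tuple.monotone_sort (fun i => -F (e0.symm i))
  let X : ℕ → ℝ := fun i => if h : i < n then F (e ⟨i, h⟩) else 0
  have hXe : ∀ i : Fin n, X i = F (e i) := by
    intro i; simp [X]
  refine ⟨X, e, hXe, ?_, ?_⟩
  · intro i j hij hj
    have h1 := hXe ⟨i, by omega⟩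
    have h2 := hXe ⟨j, hj⟩
    simp only at h1 h2
    rw [h1, h2]
    have := hmono (show (⟨i, by omega⟩ : Fin n) ≤ ⟨j, hj⟩ from hij)
    simp only [Function.comp] at this
    have h3 := neg_le_neg this
    simpa [e] using h3
  · rw [← Equiv.sum_comp e F]
    obtain ⟨k, rfl⟩ : ∃ k, n = k + 1 := ⟨n - 1, by have := NeZero.ne n; omega⟩
    exact Finset.sum_congr rfl fun i _ => hXe i

open scoped Pointwise in
lemma fiber_lemma (p : ℕ) [hp : Fact p.Prime] (h7 : 7 ≤ p) (X Y Z : (ZMod p)ˣ → ℝ)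
    (lX : ∀ a, -(23/11) ≤ X a ∧ X a ≤ 11) (lY : ∀ a, -(23/11) ≤ Y a ∧ Y a ≤ 11)
    (lZ : ∀ a, -(23/11) ≤ Z a ∧ Z a ≤ 11)
    (hP : 75 * ((p - 1 : ℕ) : ℝ)^2 <
      (∑ a, X a) * (∑ a, Y a) + (∑ a, Y a) * (∑ a, Z a) + (∑ a, Z a) * (∑ a, X a))
    (x : ZMod p) : ∃ a b c : (ZMod p)ˣ, x = (a : ZMod p) + b + c ∧
      75 < X a * Y b + Y b * Z c + Z c * X a := by
  classical
  by_contra hcon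
  push Not at hcon
  have hcard : Fintype.card (ZMod p)ˣ = p - 1 := ZMod.card_units p
  haveI : NeZero (p - 1) := ⟨by omega⟩
  obtain ⟨X', eX, hXe, hXa, hXs⟩ := exists_sorted (p-1) hcard X
  obtain ⟨Y', eY, hYe, hYa, hYs⟩ := exists_sorted (p-1) hcard Y
  obtain ⟨Z', eZ, hZe, hZa, hZs⟩ := exists_sorted (p-1) hcard Z
  obtain ⟨m, hm⟩ : ∃ m, p = 2 * m + 1 := hp.out.odd_of_ne_two (by omega)
  have bX : ∀ i < p - 1, -(23/11) ≤ X' i ∧ X' i ≤ 11 := by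
    intro i hi; have := hXe ⟨i, hi⟩; simp only at this; rw [this]; exact lX _
  have bY : ∀ i < p - 1, -(23/11) ≤ Y' i ∧ Y' i ≤ 11 := by
    intro i hi; have := hYe ⟨i, hi⟩; simp only at this; rw [this]; exact lY _
  have bZ : ∀ i < p - 1, -(23/11) ≤ Z' i ∧ Z' i ≤ 11 := by
    intro i hi; have := hZe ⟨i, hi⟩; simp only at this; rw [this]; exact lZ _
  have hmain := seq_ineq m (p-1) (by omega) (by omega) X' Y' Z' hXa hYa hZa
    (fun i hi => (bX i hi).1) (fun i hi => (bY i hi).1) (fun i hi => (bZ i hi).1)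
    (bX 0 (by omega)).2 (bY 0 (by omega)).2 (bZ 0 (by omega)).2 ?_
  · rw [hXs, hYs, hZs] at hmain
    linarith
  intro i j k hi hj hk hijk
  let top : (Fin (p-1) ≃ (ZMod p)ˣ) → Fin (p-1) → Finset (ZMod p) := fun e i =>
    (Finset.Iic i).image (fun t => ((e t : (ZMod p)ˣ) : ZMod p))
  have tcard : ∀ e i, (top e i).card = i.val + 1 := by
    intro e i
    rw [Finset.card_image_of_injective _ (fun a b h => e.injective (Units.ext h)), Fin.card_Iic]
  have tne : ∀ e i, (top e i).Nonempty := by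
    intro e i
    rw [← Finset.card_pos, tcard]; omega
  have cd1 := ZMod.cauchy_davenport hp.out (tne eX ⟨i, hi⟩) (tne eY ⟨j, hj⟩)
  have cd2 := ZMod.cauchy_davenport hp.out ((tne eX ⟨i, hi⟩).add (tne eY ⟨j, hj⟩)) (tne eZ ⟨k, hk⟩)
  rw [tcard, tcard] at cd1
  rw [tcard] at cd2
  simp only at cd1 cd2
  have hfull : top eX ⟨i, hi⟩ + top eY ⟨j, hj⟩ + top eZ ⟨k, hk⟩ = Finset.univ := by
    rw [← Finset.card_eq_iff_eq_univ, ZMod.card]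
    refine le_antisymm ?_ ?_
    · have := Finset.card_le_univ (top eX ⟨i, hi⟩ + top eY ⟨j, hj⟩ + top eZ ⟨k, hk⟩)
      rwa [ZMod.card] at this
    · omega
  have hx : x ∈ top eX ⟨i, hi⟩ + top eY ⟨j, hj⟩ + top eZ ⟨k, hk⟩ := by
    rw [hfull]; exact Finset.mem_univ _
  rw [Finset.mem_add] at hx
  obtain ⟨ab, hab, c, hc, rfl⟩ := hx
  rw [Finset.mem_add] at hab
  obtain ⟨a, ha, b, hb, rfl⟩ := hab
  simp only [top, Finset.mem_image, Finset.mem_Iic] at ha hb hc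
  obtain ⟨i', hi', rfl⟩ := ha
  obtain ⟨j', hj', rfl⟩ := hb
  obtain ⟨k', hk', rfl⟩ := hc
  have hle := hcon (eX i') (eY j') (eZ k') rfl
  rw [← hXe, ← hYe, ← hZe] at hle
  rcases box_bound (bX i hi).1 (bY j hj).1 (bZ k hk).1 (hXa i' i hi' hi) (hYa j' j hj' hj)
    (hZa k' k hk' hk) with h | h <;> linarith

def GoodRing (R : Type) [CommRing R] [Fintype Rˣ] : Prop :=
  ∀ F : Rˣ → ℝ, (∀ a, -(23/11) ≤ F a ∧ F a ≤ 11) → 5 * (Fintype.card Rˣ : ℝ) < ∑ a, F a →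
    ∀ x : R, ∃ a b c : Rˣ, x = (a : R) + b + c ∧ 75 < F a * F b + F b * F c + F c * F a

lemma GoodRing.equiv {R S : Type} [CommRing R] [CommRing S] [Fintype Rˣ] [Fintype Sˣ]
    (e : R ≃+* S) (h : GoodRing R) : GoodRing S := by
  intro F hF hs x
  let E : Rˣ ≃* Sˣ := Units.mapEquiv e.toMulEquiv
  have hE : ∀ a : Rˣ, ((E a : Sˣ) : S) = e (a : R) := fun a => rfl
  obtain ⟨a, b, c, h1, h2⟩ := h (fun a => F (E a)) (fun a => hF _) (by
    rw [Fintype.card_congr E.toEquiv]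
    have := Equiv.sum_comp E.toEquiv F
    calc _ < _ := hs
      _ = _ := this.symm) (e.symm x)
  refine ⟨E a, E b, E c, ?_, h2⟩
  rw [hE, hE, hE, ← map_add, ← map_add, ← h1, e.apply_symm_apply]

lemma GoodRing.prod {R : Type} [CommRing R] [Fintype Rˣ] (p : ℕ) [hp : Fact p.Prime] (h7 : 7 ≤ p)
    [Fintype (ZMod p × R)ˣ] (h : GoodRing R) : GoodRing (ZMod p × R) := by
  intro F hF hs x
  let E : (ZMod p)ˣ × Rˣ ≃* (ZMod p × R)ˣ := MulEquiv.prodUnits.symm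
  have hE : ∀ a, ((E a : (ZMod p × R)ˣ) : ZMod p × R) = ((a.1 : ZMod p), (a.2 : R)) := fun a => rfl
  have hcard : Fintype.card (ZMod p)ˣ = p - 1 := ZMod.card_units p
  have hn : (0:ℝ) < ((p - 1 : ℕ) : ℝ) := by
    have : 0 < p - 1 := by omega
    exact_mod_cast this
  let n : ℝ := ((p - 1 : ℕ) : ℝ)
  have hn' : 0 < n := hn
  let S : Rˣ → ℝ := fun r => ∑ y : (ZMod p)ˣ, F (E (y, r))
  have hcu : ((Finset.univ : Finset (ZMod p)ˣ).card : ℝ) = n := by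
    rw [Finset.card_univ, hcard]
  obtain ⟨a, b, c, h1, h2⟩ := h (fun r => S r / n) (fun r => by
      constructor
      · rw [le_div_iff₀ hn']
        have := Finset.card_nsmul_le_sum Finset.univ (fun y : (ZMod p)ˣ => F (E (y, r))) (-(23/11))
          (fun y _ => (hF _).1)
        rw [nsmul_eq_mul, hcu] at this
        simp only [S]; linarith
      · rw [div_le_iff₀ hn']
        have := Finset.sum_le_card_nsmul Finset.univ (fun y : (ZMod p)ˣ => F (E (y, r))) 11
          (fun y _ => (hF _).2)
        rw [nsmul_eq_mul, hcu] at this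
        simp only [S]; linarith) (by
      rw [← Finset.sum_div, lt_div_iff₀ hn']
      have e1 : ∑ r, S r = ∑ a, F a := by
        rw [← Equiv.sum_comp E.toEquiv F, Fintype.sum_prod_type_right]
        rfl
      have e2 : (Fintype.card (ZMod p × R)ˣ : ℝ) = n * Fintype.card Rˣ := by
        rw [← Fintype.card_congr E.toEquiv, Fintype.card_prod, hcard]
        push_cast; rfl
      rw [e1]; rw [e2] at hs; linarith) x.2
  obtain ⟨a', b', c', h3, h4⟩ := fiber_lemma p h7 (fun y => F (E (y, a))) (fun y => F (E (y, b)))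
    (fun y => F (E (y, c))) (fun _ => hF _) (fun _ => hF _) (fun _ => hF _) (by
      change 75 * n^2 < S a * S b + S b * S c + S c * S a
      have : S a / n * (S b / n) + S b / n * (S c / n) + S c / n * (S a / n) =
        (S a * S b + S b * S c + S c * S a) / n^2 := by field_simp
      simp only [this] at h2
      rwa [lt_div_iff₀ (by positivity)] at h2) x.1
  refine ⟨E (a', a), E (b', b), E (c', c), ?_, h4⟩
  rw [hE, hE, hE]
  exact Prod.ext h3 h1

lemma goodRing_zmod (m : ℕ) : ∀ [NeZero m], Squarefree m → Nat.Coprime m 30 →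
    GoodRing (ZMod m) := by
  induction m using induction_on_primes with
  | zero => intro h; exact absurd rfl h.out
  | one =>
    intro _ _ _ F hF hs x
    have hsub : Subsingleton (ZMod 1) := inferInstanceAs (Subsingleton (Fin 1))
    refine ⟨1, 1, 1, Subsingleton.elim _ _, ?_⟩
    have hc : Fintype.card (ZMod 1)ˣ = 1 := Fintype.card_unique
    rw [hc, Fintype.sum_unique, Subsingleton.elim default (1 : (ZMod 1)ˣ)] at hs
    push_cast at hs
    nlinarith
  | prime_mul p a hp ih =>
    intro hne hsq hco
    haveI : Fact p.Prime := ⟨hp⟩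
    haveI : NeZero a := ⟨fun h => hne.out (by simp [h])⟩
    have hpa : Nat.Coprime p a := Nat.coprime_of_squarefree_mul hsq
    have hp30 : Nat.Coprime p 30 := Nat.Coprime.coprime_mul_right hco
    have h7 : 7 ≤ p := by
      by_contra hlt
      have h2 := hp.two_le
      have : p < 7 := by omega
      interval_cases p <;> revert hp30 hp <;> decide
    have hg := ih (Squarefree.of_mul_right hsq) (Nat.Coprime.coprime_mul_left hco)
    exact GoodRing.equiv (ZMod.chineseRemainder hpa).symm (GoodRing.prod p h7 hg)

/-- Proposition: let `m` be squarefree with `gcd(m, 30) = 1` and `f : (ℤ/mℤ)* → [0,1]` with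
average greater than `5/8`. Then every `x ∈ ℤ/mℤ` can be written as `x = a + b + c` with
`a, b, c` units and `f(a)f(b) + f(b)f(c) + f(c)f(a) > (5/8)(f(a) + f(b) + f(c))`. -/
theorem stmt12 (m : ℕ) [NeZero m] (hsf : Squarefree m) (hcop : Nat.gcd m 30 = 1)
    (f : (ZMod m)ˣ → ℝ) (hf : ∀ x, f x ∈ Set.Icc (0 : ℝ) 1)
    (hsum : ∑ x : (ZMod m)ˣ, f x > 5 / 8 * (Nat.totient m : ℝ)) :
    ∀ x : ZMod m, ∃ a b c : (ZMod m)ˣ,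
      x = (a : ZMod m) + (b : ZMod m) + (c : ZMod m) ∧
      f a * f b + f b * f c + f c * f a > 5 / 8 * (f a + f b + f c) := by
  classical
  intro x
  have hco : Nat.Coprime m 30 := hcop
  obtain ⟨a, b, c, h1, h2⟩ := goodRing_zmod m hsf hco (fun y => 16 * max (f y) (2/11) - 5)
    (fun y => by
      have := hf y
      have h1 := le_max_right (f y) (2/11)
      have h2 : max (f y) (2/11) ≤ 1 := max_le this.2 (by norm_num)
      constructor <;> linarith) (by
      rw [Finset.sum_sub_distrib, ← Finset.mul_sum, Finset.sum_const, nsmul_eq_mul,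
        Finset.card_univ, ZMod.card_units_eq_totient]
      have : ∑ y, f y ≤ ∑ y, max (f y) (2/11) := Finset.sum_le_sum fun y _ => le_max_left _ _
      linarith) x
  refine ⟨a, b, c, h1, ?_⟩
  have key : ∀ r s t : ℝ, 0 ≤ s → s ≤ 1 → 0 ≤ t → t ≤ 1 →
      75 < (16 * max r (2/11) - 5) * (16 * s - 5) + (16 * s - 5) * (16 * t - 5)
        + (16 * t - 5) * (16 * max r (2/11) - 5) →
      75 < (16 * r - 5) * (16 * s - 5) + (16 * s - 5) * (16 * t - 5)
        + (16 * t - 5) * (16 * r - 5) := by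
    intro r s t hs0 hs1 ht0 ht1 h
    rcases le_total (2/11) r with hr | hr
    · rwa [max_eq_left hr] at h
    · rw [max_eq_right hr] at h
      nlinarith [mul_nonneg hs0 (sub_nonneg.2 ht1), mul_nonneg ht0 (sub_nonneg.2 hs1)]
  have hm : ∀ r ∈ Set.Icc (0:ℝ) 1, 0 ≤ max r (2/11) ∧ max r (2/11) ≤ 1 := fun r hr =>
    ⟨le_trans hr.1 (le_max_left _ _), max_le hr.2 (by norm_num)⟩
  have ha := hf a
  have hb := hf b
  have hc := hf c
  have k1 := key (f a) _ _ (hm _ hb).1 (hm _ hb).2 (hm _ hc).1 (hm _ hc).2 h2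
  have k2 := key (f b) _ _ (hm _ hc).1 (hm _ hc).2 ha.1 ha.2 (by linarith)
  have k3 := key (f c) _ _ ha.1 ha.2 hb.1 hb.2 (by linarith)
  nlinarith
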